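/- The function w : ℤ² → [0,∞) is a probability mass function (i.e. Σ_{(x,y)∈ℤ²} w(x,y) = 1), the sums Σ_{(x,y)} |x|·w(x,y) and Σ_{(x,y)} |y|·w(x,y) are finite, and the two marginal means are equal: Σ_{(x,y)} x·w(x,y) = Σ_{(x,y)} y·w(x,y) = 1/(4√7); in particular Σ_{(x,y)} (x+y)·w(x,y) = 1/(2√7). -/

import Mathlib

noncomputable def nuc : ℝ := 1 + 2 * Real.sqrt 7

noncomputable def tc : ℝ := Real.sqrt 10 / (8 * (7 + Real.sqrt 7) ^ ((3:ℝ)/2))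

noncomputable def uc : ℝ := (6/5) * (7 + Real.sqrt 7) * tc

/-- The rational parametrization `û` of the `u`-variable. -/
noncomputable def uhat (H : ℂ) : ℂ :=
  ((uc : ℂ) / 3) * H * (10 - 12 * H + 6 * H ^ 2 - H ^ 3)

/-- The rational parametrization `Ẑ₀`. -/
noncomputable def Z0hat (H : ℂ) : ℂ :=
  (1/10) * (1 - (1 - (Real.sqrt 7 : ℂ)) * H + 3 * H ^ 2 - H ^ 3)
    * (10 - 12 * H + 6 * H ^ 2 - H ^ 3)

/-- The rational parametrization `Ẑ₁`. -/
noncomputable def Z1hat (H : ℂ) : ℂ :=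
  (3 / (10 * (uc : ℂ))) *
    ((Real.sqrt 7 : ℂ) - 1 + H - 3 * (4 - 3 * H + H ^ 2) / (10 - 12 * H + 6 * H ^ 2 - H ^ 3))

/-- The rational parametrization `Â`. -/
noncomputable def Ahat (H : ℂ) : ℂ :=
  (1/10) * ((((3:ℝ)/2) ^ ((7:ℝ)/3) : ℝ) : ℂ) * (9 - 8 * H + 3 * H ^ 2) / (3 - 3 * H + H ^ 2) ^ 2

open Filter Topology Set

theorem hasSum_binomial_row (c h : ℝ) (p : ℕ) :
    HasSum (fun k : ℕ => h ^ k * c ^ (p - k) * (p.choose k : ℝ)) ((c + h) ^ p) := by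
  rw [add_comm c h, add_pow]
  refine hasSum_sum_of_ne_finset_zero fun k hk => ?_
  have : p < k := by simpa using hk
  simp [Nat.choose_eq_zero_of_lt this]

/-- Taylor coefficients at `c` of a power series `∑ a p * u ^ p`. -/
noncomputable def recenteredCoeff (a : ℕ → ℝ) (c : ℝ) (k : ℕ) : ℝ :=
  ∑' p : ℕ, a p * (c ^ (p - k) * (p.choose k : ℝ))

theorem summable_binomial_array {a : ℕ → ℝ} (ha : ∀ p, 0 ≤ a p) {c h : ℝ} (hc : 0 ≤ c)
    (hs : Summable fun p => a p * (c + |h|) ^ p) :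
    Summable fun x : ℕ × ℕ => a x.1 * (h ^ x.2 * c ^ (x.1 - x.2) * (x.1.choose x.2 : ℝ)) := by
  refine Summable.of_norm ?_
  have key : (fun x : ℕ × ℕ => ‖a x.1 * (h ^ x.2 * c ^ (x.1 - x.2) * (x.1.choose x.2 : ℝ))‖) =
      fun x : ℕ × ℕ => a x.1 * (|h| ^ x.2 * c ^ (x.1 - x.2) * (x.1.choose x.2 : ℝ)) := by
    funext x
    simp [abs_of_nonneg (ha _), abs_of_nonneg hc]
  have row (p : ℕ) := (hasSum_binomial_row c |h| p).mul_left (a p)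
  rw [key, summable_prod_of_nonneg (fun x => by have := ha x.1; positivity)]
  exact ⟨fun p => (row p).summable, by simpa only [(row _).tsum_eq] using hs⟩

theorem summable_recenteredCoeff {a : ℕ → ℝ} (ha : ∀ p, 0 ≤ a p) {c h : ℝ} (hc : 0 ≤ c)
    (hh : 0 < h) (hs : Summable fun p => a p * (c + h) ^ p) (k : ℕ) :
    Summable fun p : ℕ => a p * (c ^ (p - k) * (p.choose k : ℝ)) := by
  have h1 := (summable_binomial_array ha hc (by rwa [abs_of_pos hh])).prod_symm.prod_factor k
  refine (h1.mul_left (h ^ k)⁻¹).congr fun p => ?_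
  have : h ^ k ≠ 0 := (pow_pos hh k).ne'
  simp only [Prod.swap_prod_mk]
  field_simp

theorem hasSum_binomial_column {a : ℕ → ℝ} {c : ℝ} (h : ℝ) {k : ℕ}
    (hb : Summable fun p : ℕ => a p * (c ^ (p - k) * (p.choose k : ℝ))) :
    HasSum (fun p : ℕ => a p * (h ^ k * c ^ (p - k) * (p.choose k : ℝ)))
      (h ^ k * recenteredCoeff a c k) := by
  have key : (fun p : ℕ => a p * (h ^ k * c ^ (p - k) * (p.choose k : ℝ))) =
      fun p : ℕ => h ^ k * (a p * (c ^ (p - k) * (p.choose k : ℝ))) := by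
    funext p
    ring
  rw [key]
  exact hb.hasSum.mul_left (h ^ k)

theorem hasSum_recenteredCoeff {a : ℕ → ℝ} (ha : ∀ p, 0 ≤ a p) {c h S : ℝ} (hc : 0 ≤ c)
    (hb : ∀ k : ℕ, Summable fun p : ℕ => a p * (c ^ (p - k) * (p.choose k : ℝ)))
    (hs : Summable fun p => a p * (c + |h|) ^ p) (hS : HasSum (fun p => a p * (c + h) ^ p) S) :
    HasSum (fun k => h ^ k * recenteredCoeff a c k) S := by
  have hT := summable_binomial_array ha hc hs
  have h1 := hT.hasSum.prod_fiberwise fun p => (hasSum_binomial_row c h p).mul_left (a p)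
  have h2 := ((Equiv.prodComm ℕ ℕ).hasSum_iff.2 hT.hasSum).prod_fiberwise fun k => hasSum_binomial_column h (hb k)
  rwa [← h1.unique hS]

theorem hasSum_of_hasSum_recenteredCoeff {a : ℕ → ℝ} (ha : ∀ p, 0 ≤ a p) {c h S : ℝ}
    (hc : 0 ≤ c) (hh : 0 ≤ h)
    (hb : ∀ k : ℕ, Summable fun p : ℕ => a p * (c ^ (p - k) * (p.choose k : ℝ)))
    (hS : HasSum (fun k => h ^ k * recenteredCoeff a c k) S) :
    HasSum (fun p => a p * (c + h) ^ p) S := by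
  have col (k : ℕ) := hasSum_binomial_column h (hb k)
  have hT : Summable fun x : ℕ × ℕ =>
      a x.2 * (h ^ x.1 * c ^ (x.2 - x.1) * (x.2.choose x.1 : ℝ)) := by
    rw [summable_prod_of_nonneg (fun x => by have := ha x.2; positivity)]
    exact ⟨fun k => (col k).summable, by simpa only [(col _).tsum_eq] using hS.summable⟩
  have h1 := hT.hasSum.prod_fiberwise col
  have h2 := ((Equiv.prodComm ℕ ℕ).hasSum_iff.2 hT.hasSum).prod_fiberwise
    fun p => (hasSum_binomial_row c h p).mul_left (a p)
  rwa [← h1.unique hS]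

/-- Pringsheim's theorem: a power series with nonnegative coefficients that agrees to the left of
`R` with a function analytic at `R` still converges to that function slightly beyond `R`. -/
theorem eventually_hasSum_of_analyticAt {a : ℕ → ℝ} (ha : ∀ p, 0 ≤ a p) {g : ℝ → ℝ} {R : ℝ}
    (hR : 0 < R) (hg : AnalyticAt ℝ g R)
    (hs : ∀ u ∈ Ioo 0 R, Summable fun p => a p * u ^ p)
    (hsum : ∀ᶠ u in 𝓝[<] R, HasSum (fun p => a p * u ^ p) (g u)) :
    ∀ᶠ u in 𝓝 R, HasSum (fun p => a p * u ^ p) (g u) := by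
  obtain ⟨q, r, hq⟩ := hg
  obtain ⟨l, hl, hl'⟩ := (mem_nhdsLT_iff_exists_Ioo_subset).1 hsum
  obtain ⟨r₀, hr₀, hr₀r⟩ : ∃ r₀ : ℝ, 0 < r₀ ∧ ENNReal.ofReal r₀ ≤ r := by
    obtain ⟨x, hx, hxr⟩ := ENNReal.lt_iff_exists_nnreal_btwn.1 hq.r_pos
    exact ⟨x, by simpa using hx, by simpa using hxr.le⟩
  obtain ⟨δ, hδ, h1, h2, h3⟩ : ∃ δ : ℝ, 0 < δ ∧ 3 * δ ≤ r₀ ∧ 3 * δ ≤ R ∧ 3 * δ ≤ R - l := by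
    have hlR : 0 < R - l := sub_pos.2 hl
    refine ⟨min r₀ (min R (R - l)) / 3, by positivity, ?_, ?_, ?_⟩ <;>
      rw [mul_div_cancel₀ _ (by norm_num)] <;> simp
  set c := R - δ with hc
  have hc0 : 0 ≤ c := by linarith
  have hb := summable_recenteredCoeff ha hc0 (half_pos hδ) (hs (c + δ / 2) ⟨by linarith, by linarith⟩)
  have e1 : HasFPowerSeriesAt g
      (FormalMultilinearSeries.ofScalars ℝ (recenteredCoeff a c)) c := by
    rw [hasFPowerSeriesAt_iff]
    filter_upwards [Metric.ball_mem_nhds (0 : ℝ) (half_pos hδ)] with h hh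
    have hh : |h| < δ / 2 := by simpa using hh
    have hh' := abs_lt.1 hh
    have h0 := abs_nonneg h
    simpa [FormalMultilinearSeries.coeff_ofScalars] using
      hasSum_recenteredCoeff ha hc0 hb (hs _ ⟨by linarith, by linarith⟩)
        (hl' ⟨by linarith, by linarith⟩)
  have hδr : ENNReal.ofReal δ + ENNReal.ofReal (2 * δ) ≤ r := by
    rw [← ENNReal.ofReal_add hδ.le (by linarith)]
    exact (ENNReal.ofReal_le_ofReal (by linarith)).trans hr₀r
  have hnorm : (‖(-δ : ℝ)‖₊ : ENNReal) = ENNReal.ofReal δ := by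
    rw [nnnorm_neg, ← enorm_eq_nnnorm, Real.enorm_eq_ofReal hδ.le]
  have e2 := hq.changeOrigin (y := -δ) (by
    rw [hnorm]
    refine lt_of_lt_of_le ?_ hδr
    exact ENNReal.lt_add_right (by simp) (by simpa using hδ))
  rw [hnorm, ← sub_eq_add_neg, ← hc] at e2
  rw [← e1.eq_formalMultilinearSeries e2.hasFPowerSeriesAt] at e2
  filter_upwards [Ioo_mem_nhds (show c < R by linarith) (show R < R + δ by linarith)] with u hu
  obtain ⟨hu1, hu2⟩ := hu
  have hmem : u - c ∈ Metric.eball (0 : ℝ) (r - ENNReal.ofReal δ) := by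
    rw [mem_eball_zero_iff, Real.enorm_eq_ofReal (by linarith)]
    refine lt_of_lt_of_le ((ENNReal.ofReal_lt_ofReal_iff (by linarith)).2
      (show u - c < 2 * δ by linarith)) ?_
    exact ENNReal.le_sub_of_add_le_left (by simp) hδr
  have e3 := e2.hasSum hmem
  have e4 := hasSum_of_hasSum_recenteredCoeff ha hc0 (show 0 ≤ u - c by linarith) hb (S := g u)
    (by simpa [mul_comm] using e3)
  simpa using e4

/-- Continuation along an increasing analytic parametrization `φ` of a power series with
nonnegative coefficients. -/
theorem hasSum_of_parametrization {a : ℕ → ℝ} (ha : ∀ p, 0 ≤ a p) {φ F : ℝ → ℝ} {ρ : ℝ}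
    (hρ : 0 < ρ) (hφ0 : φ 0 = 0) (hφ : ∀ x, AnalyticAt ℝ φ x) (hmono : StrictMonoOn φ (Icc 0 1))
    (hφ' : ∀ x ∈ Ioo (0 : ℝ) 1, deriv φ x ≠ 0) (hF : ∀ x ∈ Ioo (0 : ℝ) 1, AnalyticAt ℝ F x)
    (hsum : ∀ x ∈ Ioo 0 ρ, HasSum (fun p => a p * φ x ^ p) (F x)) :
    ∀ x ∈ Ioo (0 : ℝ) 1, HasSum (fun p => a p * φ x ^ p) (F x) := by
  by_contra! hcon
  obtain ⟨x₁, hx₁, hx₁'⟩ := hcon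
  set B := {x | x ∈ Ioo (0 : ℝ) 1 ∧ ¬ HasSum (fun p => a p * φ x ^ p) (F x)} with hB
  have hBne : B.Nonempty := ⟨x₁, hx₁, hx₁'⟩
  have hBρ : ∀ x ∈ B, ρ ≤ x := fun x hx => by
    by_contra! h
    exact hx.2 (hsum x ⟨hx.1.1, h⟩)
  have hBbdd : BddBelow B := ⟨ρ, hBρ⟩
  set x₀ := sInf B with hx₀
  have h0 : 0 < x₀ := hρ.trans_le (le_csInf hBne hBρ)
  have h1 : x₀ < 1 := (csInf_le hBbdd ⟨hx₁, hx₁'⟩).trans_lt hx₁.2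
  have good : ∀ x ∈ Ioo 0 x₀, HasSum (fun p => a p * φ x ^ p) (F x) := fun x hx => by
    by_contra h
    exact (csInf_le hBbdd ⟨⟨hx.1, hx.2.trans h1⟩, h⟩).not_gt hx.2
  have hd := hφ' x₀ ⟨h0, h1⟩
  have hst := (hφ x₀).hasStrictDerivAt
  set ψ := hst.localInverse _ _ _ hd
  have hψ : AnalyticAt ℝ ψ (φ x₀) := (hφ x₀).analyticAt_localInverse hd
  have hψx : ψ (φ x₀) = x₀ := HasStrictFDerivAt.localInverse_apply_image ..
  have hleft : ∀ᶠ x in 𝓝 x₀, ψ (φ x) = x := hst.eventually_left_inverse hd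
  have hright : ∀ᶠ u in 𝓝 (φ x₀), φ (ψ u) = u := hst.eventually_right_inverse hd
  have hR : 0 < φ x₀ := by
    rw [← hφ0]
    exact hmono ⟨le_rfl, zero_le_one⟩ ⟨h0.le, h1.le⟩ h0
  have hcont : Continuous φ := continuous_iff_continuousAt.2 fun x => (hφ x).continuousAt
  have hψnhds : ∀ᶠ u in 𝓝 (φ x₀), ψ u ∈ Ioo 0 1 := by
    refine hψ.continuousAt.eventually_mem ?_
    rw [hψx]
    exact Ioo_mem_nhds h0 h1
  have key := eventually_hasSum_of_analyticAt ha (g := F ∘ ψ) hR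
    (AnalyticAt.comp (by rw [hψx]; exact hF x₀ ⟨h0, h1⟩) hψ) (fun u hu => by
      obtain ⟨x, hx, rfl⟩ := intermediate_value_Ioo h0.le hcont.continuousOn (by rwa [hφ0])
      exact (good x hx).summable) (by
      filter_upwards [self_mem_nhdsWithin, nhdsWithin_le_nhds hright, nhdsWithin_le_nhds hψnhds]
        with u hu hu1 hu2
      have hlt : ψ u < x₀ := by
        rw [← hmono.lt_iff_lt ⟨hu2.1.le, hu2.2.le⟩ ⟨h0.le, h1.le⟩, hu1]
        exact hu
      simpa [hu1] using good (ψ u) ⟨hu2.1, hlt⟩)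
  have key2 : ∀ᶠ x in 𝓝 x₀, HasSum (fun p => a p * φ x ^ p) (F x) := by
    filter_upwards [hcont.continuousAt.eventually key, hleft] with x hx hx'
    simpa [hx'] using hx
  obtain ⟨ε, hε, hball⟩ := Metric.eventually_nhds_iff.1 key2
  obtain ⟨x, hxB, hx⟩ := exists_lt_of_csInf_lt hBne (show sInf B < x₀ + ε by linarith)
  refine hxB.2 (hball ?_)
  have := csInf_le hBbdd hxB
  rw [Real.dist_eq, abs_of_nonneg (by linarith)]
  linarith

theorem sqrt_seven_sq : Real.sqrt 7 ^ 2 = 7 := Real.sq_sqrt (by norm_num)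

theorem sqrt_seven_pos : 0 < Real.sqrt 7 := Real.sqrt_pos.2 (by norm_num)

theorem tc_pos : 0 < tc := by
  have := sqrt_seven_pos
  unfold tc
  positivity

theorem uc_pos : 0 < uc := by
  have := sqrt_seven_pos
  have := tc_pos
  unfold uc
  positivity

theorem uc_sq : (7 + Real.sqrt 7) * uc ^ 2 = 9 / 40 := by
  have hs := sqrt_seven_pos
  have h7 : (0 : ℝ) ≤ 7 + Real.sqrt 7 := by positivity
  have ht : tc ^ 2 = 10 / (64 * (7 + Real.sqrt 7) ^ 3) := by
    have h : (((7 : ℝ) + Real.sqrt 7) ^ ((3 : ℝ) / 2)) ^ 2 = (7 + Real.sqrt 7) ^ 3 := by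
      rw [← Real.rpow_natCast, ← Real.rpow_mul h7, ← Real.rpow_natCast]
      norm_num
    rw [tc, div_pow, mul_pow, h, Real.sq_sqrt (by norm_num)]
    norm_num
  rw [uc, mul_pow, mul_pow, ht]
  field_simp
  norm_num

theorem nuc_sq_sub_one : nuc ^ 2 - 1 = 4 * (7 + Real.sqrt 7) := by
  unfold nuc
  linear_combination 4 * sqrt_seven_sq

theorem nuc_sq_sub_one_mul_tc : (nuc ^ 2 - 1) * tc = 10 / 3 * uc := by
  rw [nuc_sq_sub_one, uc]
  ring

theorem nuc_sq_sub_one_pos : 0 < nuc ^ 2 - 1 := by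
  have := sqrt_seven_pos
  rw [nuc_sq_sub_one]
  positivity

/-- The cubic factor shared by the parametrizations. -/
noncomputable def cubicFactor (x : ℝ) : ℝ := 10 - 12 * x + 6 * x ^ 2 - x ^ 3

/-- The restriction of `uhat` to the real line. -/
noncomputable def uhatReal (x : ℝ) : ℝ := uc / 3 * x * cubicFactor x

/-- The restriction of `Z0hat` to the real line. -/
noncomputable def Z0hatReal (x : ℝ) : ℝ :=
  1 / 10 * (1 - (1 - Real.sqrt 7) * x + 3 * x ^ 2 - x ^ 3) * cubicFactor x

/-- The restriction of `Z1hat` to the real line. -/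
noncomputable def Z1hatReal (x : ℝ) : ℝ :=
  3 / (10 * uc) * (Real.sqrt 7 - 1 + x - 3 * (4 - 3 * x + x ^ 2) / cubicFactor x)

theorem uhat_ofReal (x : ℝ) : uhat x = (uhatReal x : ℂ) := by
  simp [uhat, uhatReal, cubicFactor]

theorem Z0hat_ofReal (x : ℝ) : Z0hat x = (Z0hatReal x : ℂ) := by
  simp [Z0hat, Z0hatReal, cubicFactor]

theorem Z1hat_ofReal (x : ℝ) : Z1hat x = (Z1hatReal x : ℂ) := by
  simp [Z1hat, Z1hatReal, cubicFactor]

theorem cubicFactor_pos {x : ℝ} (hx : x ≤ 1) : 0 < cubicFactor x := by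
  have h : cubicFactor x = 2 + (2 - x) ^ 3 := by unfold cubicFactor; ring
  have : 0 < (2 - x) ^ 3 := pow_pos (by linarith) 3
  rw [h]
  positivity

theorem uhatReal_zero : uhatReal 0 = 0 := by simp [uhatReal]

theorem uhatReal_one : uhatReal 1 = uc := by
  norm_num [uhatReal, cubicFactor]

theorem Z0hatReal_zero : Z0hatReal 0 = 1 := by
  norm_num [Z0hatReal, cubicFactor]

theorem uhatReal_pos {x : ℝ} (h0 : 0 < x) (h1 : x ≤ 1) : 0 < uhatReal x := by
  have := cubicFactor_pos h1
  have := uc_pos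
  unfold uhatReal
  positivity

theorem uhatReal_one_sub (x : ℝ) :
    uhatReal 1 - uhatReal x = uc * (1 - x) ^ 3 * (3 - x) / 3 := by
  rw [uhatReal_one, uhatReal, cubicFactor]
  ring

theorem hasDerivAt_uhatReal (x : ℝ) :
    HasDerivAt uhatReal (uc / 3 * (2 * (1 - x) ^ 2 * (5 - 2 * x))) x := by
  have h : uhatReal = fun x => uc / 3 * (10 * x - 12 * x ^ 2 + 6 * x ^ 3 - x ^ 4) := by
    funext x
    unfold uhatReal cubicFactor
    ring
  rw [h]
  have h1 := (((((hasDerivAt_id x).const_mul 10).sub ((hasDerivAt_pow 2 x).const_mul 12)).add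
    ((hasDerivAt_pow 3 x).const_mul 6)).sub (hasDerivAt_pow 4 x)).const_mul (uc / 3)
  refine h1.congr_deriv ?_
  push_cast
  ring

theorem deriv_uhatReal_pos {x : ℝ} (hx : x < 1) : 0 < deriv uhatReal x := by
  rw [(hasDerivAt_uhatReal x).deriv]
  have := uc_pos
  have : 0 < 1 - x := by linarith
  have : 0 < 5 - 2 * x := by linarith
  positivity

theorem continuous_uhatReal : Continuous uhatReal :=
  continuous_iff_continuousAt.2 fun x => (hasDerivAt_uhatReal x).continuousAt

theorem strictMonoOn_uhatReal : StrictMonoOn uhatReal (Icc 0 1) :=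
  strictMonoOn_of_deriv_pos (convex_Icc 0 1) continuous_uhatReal.continuousOn fun x hx => by
    rw [interior_Icc] at hx
    exact deriv_uhatReal_pos hx.2

theorem analyticAt_cubicFactor (x : ℝ) : AnalyticAt ℝ cubicFactor x := by
  unfold cubicFactor
  fun_prop

theorem analyticAt_uhatReal (x : ℝ) : AnalyticAt ℝ uhatReal x := by
  have := analyticAt_cubicFactor x
  unfold uhatReal
  fun_prop

theorem analyticAt_Z0hatReal (x : ℝ) : AnalyticAt ℝ Z0hatReal x := by
  have := analyticAt_cubicFactor x
  unfold Z0hatReal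
  fun_prop

theorem analyticAt_Z1hatReal {x : ℝ} (hx : x ≤ 1) : AnalyticAt ℝ Z1hatReal x := by
  have := analyticAt_cubicFactor x
  have := (cubicFactor_pos hx).ne'
  unfold Z1hatReal
  fun_prop (disch := assumption)

theorem Z0hatReal_one : Z0hatReal 1 = 3 * (2 + Real.sqrt 7) / 10 := by
  unfold Z0hatReal cubicFactor
  ring

theorem Z1hatReal_one : Z1hatReal 1 = 3 * (Real.sqrt 7 - 2) / (10 * uc) := by
  unfold Z1hatReal cubicFactor
  ring

theorem tendsto_slope_Z0hatReal :
    Tendsto (fun x => (Z0hatReal 1 - Z0hatReal x) / (uhatReal 1 - uhatReal x)) (𝓝[<] 1)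
      (𝓝 (3 * (2 * Real.sqrt 7 + 1) / (20 * uc))) := by
  have hu := uc_pos.ne'
  have h : Tendsto
      (fun x : ℝ => 3 / (10 * uc) * (2 + Real.sqrt 7 - cubicFactor x / (3 - x))) (𝓝[<] 1)
      (𝓝 (3 / (10 * uc) * (2 + Real.sqrt 7 - cubicFactor 1 / (3 - 1)))) := by
    have := (analyticAt_cubicFactor 1).continuousAt
    have hc : ContinuousAt
        (fun x : ℝ => 3 / (10 * uc) * (2 + Real.sqrt 7 - cubicFactor x / (3 - x))) 1 := by
      fun_prop (disch := norm_num)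
    exact hc.tendsto.mono_left nhdsWithin_le_nhds
  convert h.congr' ?_ using 2
  · norm_num [cubicFactor]
    field_simp
    ring
  · filter_upwards [self_mem_nhdsWithin] with x hx
    have hx : x < 1 := hx
    have h1 : 1 - x ≠ 0 := by linarith
    have h3 : 3 - x ≠ 0 := by linarith
    rw [uhatReal_one_sub, Z0hatReal_one, Z0hatReal, cubicFactor]
    field_simp
    ring

theorem tendsto_slope_Z1hatReal :
    Tendsto (fun x => (Z1hatReal 1 - Z1hatReal x) / (uhatReal 1 - uhatReal x)) (𝓝[<] 1)
      (𝓝 (3 / (20 * uc ^ 2))) := by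
  have hu := uc_pos.ne'
  have h : Tendsto (fun x : ℝ => 9 * (2 - x) / (10 * uc ^ 2 * cubicFactor x * (3 - x))) (𝓝[<] 1)
      (𝓝 (9 * (2 - 1) / (10 * uc ^ 2 * cubicFactor 1 * (3 - 1)))) := by
    have := (analyticAt_cubicFactor 1).continuousAt
    have hP := cubicFactor_pos (le_refl (1 : ℝ))
    have hne : 10 * uc ^ 2 * cubicFactor 1 * (3 - 1) ≠ 0 := by positivity
    have hc : ContinuousAt
        (fun x : ℝ => 9 * (2 - x) / (10 * uc ^ 2 * cubicFactor x * (3 - x))) 1 := by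
      fun_prop (disch := assumption)
    exact hc.tendsto.mono_left nhdsWithin_le_nhds
  convert h.congr' ?_ using 2
  · norm_num [cubicFactor]
    field_simp
    norm_num
  · filter_upwards [self_mem_nhdsWithin] with x hx
    have hx : x < 1 := hx
    have h1 : 1 - x ≠ 0 := by linarith
    have h3 : 3 - x ≠ 0 := by linarith
    have hP := (cubicFactor_pos hx.le).ne'
    rw [uhatReal_one_sub, Z1hatReal_one, Z1hatReal]
    field_simp
    rw [cubicFactor]
    ring

/-- The coefficient of `v` in the functional equation identifies with `Z1hat`. -/
theorem uhatReal_sq_mul_Z1hatReal {x : ℝ} (hx : x ≤ 1) :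
    (nuc * uhatReal x - (nuc ^ 2 - 1) * tc * (Z0hatReal x + uhatReal x * Z1hatReal 0))
        * (Z0hatReal x - 1)
      - (nuc ^ 2 - 1) * uhatReal x * (uhatReal x ^ 2 - tc * Z0hatReal x * Z1hatReal 0)
      = uhatReal x ^ 2 * Z1hatReal x := by
  have hu := uc_pos.ne'
  have hP := (cubicFactor_pos hx).ne'
  have h1 : uhatReal x * Z1hatReal x = 1 / 10 * x *
      ((Real.sqrt 7 - 1 + x) * cubicFactor x - 3 * (4 - 3 * x + x ^ 2)) := by
    unfold uhatReal Z1hatReal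
    field_simp
  have h2 : uc * Z1hatReal 0 = 3 / 10 * (Real.sqrt 7 - 11 / 5) := by
    unfold Z1hatReal cubicFactor
    field_simp
    norm_num
    ring
  have h3 : (nuc ^ 2 - 1) * uc ^ 2 = 9 / 10 := by
    rw [nuc_sq_sub_one]
    linear_combination 4 * uc_sq
  have hkt := nuc_sq_sub_one_mul_tc
  have e : uhatReal x = uc * (x * cubicFactor x / 3) := by unfold uhatReal; ring
  have e1 : (nuc * uhatReal x - (nuc ^ 2 - 1) * tc * (Z0hatReal x + uhatReal x * Z1hatReal 0))
        * (Z0hatReal x - 1)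
      - (nuc ^ 2 - 1) * uhatReal x * (uhatReal x ^ 2 - tc * Z0hatReal x * Z1hatReal 0)
      = uc * (nuc * (x * cubicFactor x / 3) * (Z0hatReal x - 1)
        - 10 / 3 * Z0hatReal x * (Z0hatReal x - 1)
        + 10 / 3 * (x * cubicFactor x / 3) * (3 / 10 * (Real.sqrt 7 - 11 / 5))
        - 9 / 10 * (x * cubicFactor x / 3) ^ 3) := by
    rw [e]
    generalize Z0hatReal x = A
    generalize x * cubicFactor x / 3 = r
    linear_combination (-A * (A - 1) + uc * r * Z1hatReal 0) * hkt
      + 10 / 3 * uc * r * h2 - uc * r ^ 3 * h3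
  have e2 : uhatReal x ^ 2 * Z1hatReal x = uc * (x * cubicFactor x / 3) * (1 / 10 * x *
      ((Real.sqrt 7 - 1 + x) * cubicFactor x - 3 * (4 - 3 * x + x ^ 2))) := by
    rw [← h1, ← e]
    ring
  rw [e1, e2, Z0hatReal, nuc, cubicFactor]
  linear_combination
    (uc * (x * (10 - 12 * x + 6 * x ^ 2 - x ^ 3)) ^ 2 / 30) * sqrt_seven_sq

/-- Monotone convergence for series of nonnegative terms, along a filter. -/
theorem hasSum_of_tendsto_of_le {l : Filter ℝ} [l.NeBot] {c : ℝ → ℕ → ℝ} {d : ℕ → ℝ} {G : ℝ → ℝ}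
    {L : ℝ} (hd : ∀ p, 0 ≤ d p) (hle : ∀ᶠ x in l, ∀ p, 0 ≤ c x p ∧ c x p ≤ d p)
    (hlim : ∀ p, Tendsto (fun x => c x p) l (𝓝 (d p)))
    (hsum : ∀ᶠ x in l, HasSum (c x) (G x)) (hG : Tendsto G l (𝓝 L)) : HasSum d L := by
  have hpart : ∀ s : Finset ℕ, ∑ p ∈ s, d p ≤ L := fun s => by
    refine le_of_tendsto_of_tendsto (tendsto_finsetSum s fun p _ => hlim p) hG ?_
    filter_upwards [hle, hsum] with x hx hx'
    exact sum_le_hasSum s (fun p _ => (hx p).1) hx'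
  have hsd : Summable d := summable_of_sum_le hd hpart
  have h1 : ∑' p, d p ≤ L := hsd.tsum_le_of_sum_le hpart
  have h2 : L ≤ ∑' p, d p := by
    refine le_of_tendsto hG ?_
    filter_upwards [hle, hsum] with x hx hx'
    exact hasSum_le (fun p => (hx p).2) hx' hsd.hasSum
  exact h1.antisymm h2 ▸ hsd.hasSum

section Endpoint

variable {a : ℕ → ℝ} {φ F : ℝ → ℝ} {D : ℝ}

theorem eventually_mem_Ioo_parameter (hφ0 : φ 0 = 0) (hmono : StrictMonoOn φ (Icc 0 1)) :
    ∀ᶠ x in 𝓝[<] (1 : ℝ), x ∈ Ioo (0 : ℝ) 1 ∧ 0 < φ x ∧ φ x < φ 1 := by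
  filter_upwards [Ioo_mem_nhdsLT (zero_lt_one (α := ℝ))] with x hx
  refine ⟨hx, ?_, hmono ⟨hx.1.le, hx.2.le⟩ ⟨zero_le_one, le_rfl⟩ hx.2⟩
  rw [← hφ0]
  exact hmono ⟨le_rfl, zero_le_one⟩ ⟨hx.1.le, hx.2.le⟩ hx.1

theorem hasSum_endpoint (ha : ∀ p, 0 ≤ a p) (hφ0 : φ 0 = 0) (hmono : StrictMonoOn φ (Icc 0 1))
    (hφ : ContinuousAt φ 1) (hF : ContinuousAt F 1)
    (hsum : ∀ x ∈ Ioo (0 : ℝ) 1, HasSum (fun p => a p * φ x ^ p) (F x)) :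
    HasSum (fun p => a p * φ 1 ^ p) (F 1) := by
  have hev := eventually_mem_Ioo_parameter hφ0 hmono
  have h1 : 0 ≤ φ 1 := by
    rw [← hφ0]
    exact (hmono ⟨le_rfl, zero_le_one⟩ ⟨zero_le_one, le_rfl⟩ zero_lt_one).le
  refine hasSum_of_tendsto_of_le (l := 𝓝[<] (1 : ℝ)) (c := fun x p => a p * φ x ^ p) (G := F)
    (fun p => mul_nonneg (ha p) (pow_nonneg h1 p)) ?_ (fun p => ?_) ?_
    (hF.tendsto.mono_left nhdsWithin_le_nhds)
  · filter_upwards [hev] with x hx p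
    exact ⟨mul_nonneg (ha p) (pow_nonneg hx.2.1.le p),
      mul_le_mul_of_nonneg_left (pow_le_pow_left₀ hx.2.1.le hx.2.2.le p) (ha p)⟩
  · exact ((hφ.tendsto.mono_left nhdsWithin_le_nhds).pow p).const_mul (a p)
  · filter_upwards [hev] with x hx
    exact hsum x hx.1

theorem hasSum_deriv_endpoint (ha : ∀ p, 0 ≤ a p) (hφ0 : φ 0 = 0)
    (hmono : StrictMonoOn φ (Icc 0 1)) (hφ : ContinuousAt φ 1) (hF : ContinuousAt F 1)
    (hD : Tendsto (fun x => (F 1 - F x) / (φ 1 - φ x)) (𝓝[<] 1) (𝓝 D))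
    (hsum : ∀ x ∈ Ioo (0 : ℝ) 1, HasSum (fun p => a p * φ x ^ p) (F x)) :
    HasSum (fun p : ℕ => a p * (p * φ 1 ^ (p - 1))) D := by
  have hev := eventually_mem_Ioo_parameter hφ0 hmono
  have h1 : 0 ≤ φ 1 := by
    rw [← hφ0]
    exact (hmono ⟨le_rfl, zero_le_one⟩ ⟨zero_le_one, le_rfl⟩ zero_lt_one).le
  have hend := hasSum_endpoint ha hφ0 hmono hφ hF hsum
  have geom (u : ℝ) (hu0 : 0 ≤ u) (hu1 : u ≤ φ 1) (p : ℕ) :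
      ∑ i ∈ Finset.range p, φ 1 ^ i * u ^ (p - 1 - i) ≤ p * φ 1 ^ (p - 1) := by
    calc ∑ i ∈ Finset.range p, φ 1 ^ i * u ^ (p - 1 - i)
        ≤ ∑ i ∈ Finset.range p, φ 1 ^ (p - 1) := by
          refine Finset.sum_le_sum fun i hi => ?_
          have hi : i < p := by simpa using hi
          calc φ 1 ^ i * u ^ (p - 1 - i) ≤ φ 1 ^ i * φ 1 ^ (p - 1 - i) := by gcongr
            _ = φ 1 ^ (p - 1) := by rw [← pow_add]; congr 1; omega
      _ = p * φ 1 ^ (p - 1) := by simp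
  refine hasSum_of_tendsto_of_le (l := 𝓝[<] (1 : ℝ))
    (c := fun x p => a p * ∑ i ∈ Finset.range p, φ 1 ^ i * φ x ^ (p - 1 - i))
    (fun p => mul_nonneg (ha p) (by positivity)) ?_ (fun p => ?_) ?_ hD
  · filter_upwards [hev] with x hx p
    have := ha p
    have := hx.2.1
    exact ⟨by positivity, mul_le_mul_of_nonneg_left (geom _ hx.2.1.le hx.2.2.le p) (ha p)⟩
  · have hlim : Tendsto (fun x => ∑ i ∈ Finset.range p, φ 1 ^ i * φ x ^ (p - 1 - i)) (𝓝[<] 1)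
        (𝓝 (∑ i ∈ Finset.range p, φ 1 ^ i * φ 1 ^ (p - 1 - i))) :=
      tendsto_finsetSum _ fun i _ =>
        ((hφ.tendsto.mono_left nhdsWithin_le_nhds).pow _).const_mul _
    have hval : ∑ i ∈ Finset.range p, φ 1 ^ i * φ 1 ^ (p - 1 - i) = p * φ 1 ^ (p - 1) :=
      geom_sum₂_self (φ 1) p
    rw [hval] at hlim
    exact hlim.const_mul (a p)
  · filter_upwards [hev] with x hx
    have hne : φ 1 - φ x ≠ 0 := (sub_pos.2 hx.2.2).ne'
    have h := (hend.sub (hsum x hx.1)).div_const (φ 1 - φ x)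
    refine h.congr_fun fun p => ?_
    rw [← mul_sub, mul_div_assoc, ← geom_sum₂_mul, mul_div_cancel_right₀ _ hne]

end Endpoint

/-- First-order behaviour at `0` of a power series with nonnegative coefficients. -/
theorem powerSeries_slope_bounds {c : ℕ → ℝ} (hc : ∀ p, 0 ≤ c p) {u₀ u S₀ S : ℝ} (hu : 0 < u)
    (huu₀ : u ≤ u₀) (hS₀ : HasSum (fun p => c p * u₀ ^ p) S₀)
    (hS : HasSum (fun p => c p * u ^ p) S) :
    c 1 ≤ (S - c 0) / u ∧ (S - c 0) / u ≤ c 1 + u * ((S₀ - c 0) / u₀ ^ 2) := by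
  have hu₀ : 0 < u₀ := hu.trans_le huu₀
  have shift (v T : ℝ) (hv : 0 < v) (hT : HasSum (fun p => c p * v ^ p) T) :
      HasSum (fun p => c (p + 1) * v ^ p) ((T - c 0) / v) := by
    have h := ((hasSum_nat_add_iff' 1).2 hT).div_const v
    simp only [Finset.range_one, Finset.sum_singleton, pow_zero, mul_one] at h
    refine h.congr_fun fun p => ?_
    rw [pow_succ, ← mul_assoc, mul_div_cancel_right₀ _ hv.ne']
  have h := shift u S hu hS
  have h₀ := shift u₀ S₀ hu₀ hS₀
  constructor
  · simpa using sum_le_hasSum {0} (fun p _ => mul_nonneg (hc (p + 1)) (pow_nonneg hu.le p)) h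
  · have hmaj := (hasSum_ite_eq 0 (c 1)).add (h₀.mul_left (u / u₀))
    have hval : c 1 + u / u₀ * ((S₀ - c 0) / u₀) = c 1 + u * ((S₀ - c 0) / u₀ ^ 2) := by
      field_simp
    rw [hval] at hmaj
    refine hasSum_le (fun p => ?_) h hmaj
    rcases p with _ | p
    · have := hc 1
      have : 0 ≤ u / u₀ * (c 1 * 1) := by positivity
      simpa using this
    · have h1 : (u : ℝ) ^ (p + 1) ≤ u / u₀ * u₀ ^ (p + 1) := by
        have : u ^ p ≤ u₀ ^ p := pow_le_pow_left₀ hu.le huu₀ p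
        calc u ^ (p + 1) = u * u ^ p := by ring
          _ ≤ u * u₀ ^ p := by gcongr
          _ = u / u₀ * u₀ ^ (p + 1) := by rw [pow_succ]; field_simp
      have := mul_le_mul_of_nonneg_left h1 (hc (p + 1 + 1))
      simp only [Nat.add_eq_zero_iff, one_ne_zero, and_false, if_false, zero_add]
      linarith

theorem tendsto_slope_powerSeries {c : ℕ → ℝ} (hc : ∀ p, 0 ≤ c p) {φ G : ℝ → ℝ} {ε : ℝ}
    (hε : 0 < ε) (hφ : Tendsto φ (𝓝[>] 0) (𝓝 0)) (hpos : ∀ x ∈ Ioo 0 ε, 0 < φ x)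
    (hG : ∀ x ∈ Ioo 0 ε, HasSum (fun p => c p * φ x ^ p) (G x)) :
    Tendsto (fun x => (G x - c 0) / φ x) (𝓝[>] 0) (𝓝 (c 1)) := by
  have hmem : ε / 2 ∈ Ioo 0 ε := ⟨by linarith, by linarith⟩
  have hev : ∀ᶠ x in 𝓝[>] (0 : ℝ), x ∈ Ioo 0 ε ∧ φ x ≤ φ (ε / 2) :=
    Filter.Eventually.and (Ioo_mem_nhdsGT hε) (hφ.eventually_le_const (hpos _ hmem))
  have hlim : Tendsto (fun x => c 1 + φ x * ((G (ε / 2) - c 0) / φ (ε / 2) ^ 2)) (𝓝[>] 0)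
      (𝓝 (c 1)) := by
    simpa using (hφ.mul_const _).const_add (c 1)
  have hbd : ∀ᶠ x in 𝓝[>] (0 : ℝ), c 1 ≤ (G x - c 0) / φ x ∧
      (G x - c 0) / φ x ≤ c 1 + φ x * ((G (ε / 2) - c 0) / φ (ε / 2) ^ 2) := by
    filter_upwards [hev] with x hx
    exact powerSeries_slope_bounds hc (hpos x hx.1) hx.2 (hG _ hmem) (hG x hx.1)
  exact tendsto_of_tendsto_of_tendsto_of_le_of_le' tendsto_const_nhds hlim
    (hbd.mono fun _ h => h.1) (hbd.mono fun _ h => h.2)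

/-- A mass function carried by an injectively indexed family of points: integrating a function `ψ`
against it. -/
theorem hasSum_mul_pointMasses {α : Type*} [DecidableEq α] {e : ℕ → α} (he : Function.Injective e)
    {b : ℕ → ℝ} {ψ : α → ℝ} {B : ℝ} (h : HasSum (fun k => ψ (e k) * b k) B) :
    HasSum (fun v => ψ v * ∑' k, if v = e k then b k else 0) B := by
  have hval (k : ℕ) : (∑' j, if e k = e j then b j else 0) = b k := by
    rw [tsum_eq_single k fun j hj => if_neg fun hh => hj (he hh.symm), if_pos rfl]
  rw [← he.hasSum_iff]
  · simpa only [Function.comp_def, hval] using h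
  · intro v hv
    have : ∀ k, v ≠ e k := fun k hk => hv ⟨k, hk.symm⟩
    simp [this]

theorem hasSum_mul_pointMass {α : Type*} [DecidableEq α] (v₀ : α) (b : ℝ) (ψ : α → ℝ) :
    HasSum (fun v => ψ v * if v = v₀ then b else 0) (ψ v₀ * b) := by
  have := hasSum_ite_eq v₀ (ψ v₀ * b)
  refine this.congr_fun fun v => ?_
  split_ifs with h <;> simp [h]

/-- `Z` is the sum of the double series with coefficients `z` and solves the functional equation,
at all real parameters in `[0, ρ)`. -/
def SolvesEquation (z : ℕ → ℕ → ℝ) (Z : ℝ → ℝ → ℝ) (ρ : ℝ) : Prop :=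
  ∀ x ∈ Ico 0 ρ, ∀ y ∈ Ico 0 ρ,
    HasSum (fun pq : ℕ × ℕ => z pq.1 pq.2 * uhatReal x ^ pq.1 * uhatReal y ^ pq.2) (Z x y) ∧
    (nuc * uhatReal y * uhatReal x - uhatReal x ^ 2
        - (nuc ^ 2 - 1) * tc * uhatReal y * (Z0hatReal x + uhatReal x * Z1hatReal y))
        * (Z x y - Z0hatReal y)
      = uhatReal x ^ 2 * (Z0hatReal y - Z0hatReal x)
        + (nuc ^ 2 - 1) * uhatReal x * uhatReal y
          * (uhatReal x ^ 2 - tc * Z0hatReal x * Z1hatReal y)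

theorem hasSum_rows {z : ℕ → ℕ → ℝ} {u v S : ℝ} {c : ℕ → ℝ}
    (hS : HasSum (fun pq : ℕ × ℕ => z pq.1 pq.2 * u ^ pq.1 * v ^ pq.2) S)
    (hrow : ∀ p, HasSum (fun q => z p q * v ^ q) (c p)) : HasSum (fun p => c p * u ^ p) S :=
  hS.prod_fiberwise fun p =>
    ((hrow p).mul_right (u ^ p)).congr_fun fun q => by ring

theorem summable_row {z : ℕ → ℕ → ℝ} {u v : ℝ} (hu : 0 < u)
    (hS : Summable fun pq : ℕ × ℕ => z pq.1 pq.2 * u ^ pq.1 * v ^ pq.2) (p : ℕ) :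
    Summable fun q => z p q * v ^ q := by
  refine ((hS.prod_factor p).mul_left (u ^ p)⁻¹).congr fun q => ?_
  have : u ^ p ≠ 0 := (pow_pos hu p).ne'
  field_simp

theorem hasSum_swap {z : ℕ → ℕ → ℝ} {u v S : ℝ}
    (hS : HasSum (fun pq : ℕ × ℕ => z pq.1 pq.2 * u ^ pq.1 * v ^ pq.2) S) :
    HasSum (fun pq : ℕ × ℕ => z pq.2 pq.1 * v ^ pq.1 * u ^ pq.2) S :=
  ((Equiv.prodComm ℕ ℕ).hasSum_iff.2 hS).congr_fun fun pq => by simp; ring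

theorem tendsto_uhatReal_nhdsGT_zero : Tendsto uhatReal (𝓝[>] 0) (𝓝 0) := by
  have := continuous_uhatReal.continuousAt (x := 0) |>.tendsto
  rw [uhatReal_zero] at this
  exact this.mono_left nhdsWithin_le_nhds

theorem tendsto_Z0hatReal_nhdsGT_zero : Tendsto Z0hatReal (𝓝[>] 0) (𝓝 1) := by
  have := (analyticAt_Z0hatReal 0).continuousAt.tendsto
  rw [Z0hatReal_zero] at this
  exact this.mono_left nhdsWithin_le_nhds

section Coefficients

variable {z : ℕ → ℕ → ℝ} {Z : ℝ → ℝ → ℝ} {ρ : ℝ}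

theorem hasSum_coeff_zero_left (hρ : 0 < ρ) (hρ1 : ρ ≤ 1) (hZ : SolvesEquation z Z ρ) {y : ℝ}
    (hy : y ∈ Ioo 0 ρ) : HasSum (fun q => z 0 q * uhatReal y ^ q) (Z0hatReal y) := by
  have hv := uhatReal_pos hy.1 (hy.2.le.trans hρ1)
  obtain ⟨h1, h2⟩ := hZ 0 ⟨le_rfl, hρ⟩ y ⟨hy.1.le, hy.2⟩
  have hm : ρ / 2 ∈ Ioo 0 ρ := ⟨by linarith, by linarith⟩
  have hu := uhatReal_pos hm.1 (hm.2.le.trans hρ1)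
  have hrow := summable_row hu (hZ (ρ / 2) ⟨hm.1.le, hm.2⟩ y ⟨hy.1.le, hy.2⟩).1.summable
  have h3 := hasSum_rows h1 fun p => (hrow p).hasSum
  rw [uhatReal_zero] at h3
  have h4 := hasSum_single (f := fun p => (∑' q, z p q * uhatReal y ^ q) * (0 : ℝ) ^ p) 0
    fun p hp => by simp [hp]
  have h5 : Z 0 y = Z0hatReal y := by
    rw [uhatReal_zero, Z0hatReal_zero] at h2
    have hne : (nuc ^ 2 - 1) * tc * uhatReal y ≠ 0 :=
      mul_ne_zero (mul_ne_zero nuc_sq_sub_one_pos.ne' tc_pos.ne') hv.ne'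
    refine sub_eq_zero.1 (mul_left_cancel₀ hne ?_)
    linear_combination -h2
  have h6 := h3.unique h4
  simp only [pow_zero, mul_one] at h6
  rw [← h5, h6]
  exact (hrow 0).hasSum

theorem hasSum_coeff_one_left (hz : ∀ p q, 0 ≤ z p q) (hρ : 0 < ρ) (hρ1 : ρ ≤ 1)
    (hZ : SolvesEquation z Z ρ) {y : ℝ} (hy : y ∈ Ioo 0 ρ) :
    HasSum (fun q => z 1 q * uhatReal y ^ q) (Z1hatReal y) := by
  have hv := uhatReal_pos hy.1 (hy.2.le.trans hρ1)
  have hm : ρ / 2 ∈ Ioo 0 ρ := ⟨by linarith, by linarith⟩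
  have hrow := summable_row (uhatReal_pos hm.1 (hm.2.le.trans hρ1))
    (hZ (ρ / 2) ⟨hm.1.le, hm.2⟩ y ⟨hy.1.le, hy.2⟩).1.summable
  set c : ℕ → ℝ := fun p => ∑' q, z p q * uhatReal y ^ q with hc
  have hc0 : c 0 = Z0hatReal y := (hasSum_coeff_zero_left hρ hρ1 hZ hy).tsum_eq
  have hslope := tendsto_slope_powerSeries (c := c) (φ := uhatReal) (G := fun x => Z x y)
    (fun p => tsum_nonneg fun q => mul_nonneg (hz p q) (pow_nonneg hv.le q)) hρ
    tendsto_uhatReal_nhdsGT_zero (fun x hx => uhatReal_pos hx.1 (hx.2.le.trans hρ1))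
    (fun x hx => hasSum_rows (hZ x ⟨hx.1.le, hx.2⟩ y ⟨hy.1.le, hy.2⟩).1 fun p => (hrow p).hasSum)
  have hu := tendsto_uhatReal_nhdsGT_zero
  have hA := tendsto_Z0hatReal_nhdsGT_zero
  have hl : Tendsto (fun x => (nuc * uhatReal y * uhatReal x - uhatReal x ^ 2
      - (nuc ^ 2 - 1) * tc * uhatReal y * (Z0hatReal x + uhatReal x * Z1hatReal y))
      * ((Z x y - c 0) / uhatReal x)) (𝓝[>] 0)
      (𝓝 ((nuc * uhatReal y * 0 - 0 ^ 2
      - (nuc ^ 2 - 1) * tc * uhatReal y * (1 + 0 * Z1hatReal y)) * c 1)) :=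
    (((hu.const_mul _).sub (hu.pow 2)).sub ((hA.add (hu.mul_const _)).const_mul _)).mul hslope
  have hr : Tendsto (fun x => uhatReal x * (Z0hatReal y - Z0hatReal x)
      + (nuc ^ 2 - 1) * uhatReal y * (uhatReal x ^ 2 - tc * Z0hatReal x * Z1hatReal y)) (𝓝[>] 0)
      (𝓝 (0 * (Z0hatReal y - 1)
      + (nuc ^ 2 - 1) * uhatReal y * (0 ^ 2 - tc * 1 * Z1hatReal y))) :=
    (hu.mul (hA.const_sub _)).add
      (((hu.pow 2).sub ((hA.const_mul tc).mul_const _)).const_mul _)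
  have heq := tendsto_nhds_unique (hl.congr' (by
    filter_upwards [Ioo_mem_nhdsGT hρ] with x hx
    have hux := (uhatReal_pos hx.1 (hx.2.le.trans hρ1)).ne'
    have h2 := (hZ x ⟨hx.1.le, hx.2⟩ y ⟨hy.1.le, hy.2⟩).2
    rw [hc0, ← mul_div_assoc, h2]
    field_simp)) hr
  have hne : (nuc ^ 2 - 1) * tc * uhatReal y ≠ 0 :=
    mul_ne_zero (mul_ne_zero nuc_sq_sub_one_pos.ne' tc_pos.ne') hv.ne'
  have hc1 : c 1 = Z1hatReal y := mul_left_cancel₀ hne (by linear_combination -heq)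
  rw [← hc1]
  exact (hrow 1).hasSum

theorem hasSum_coeff_one_right (hz : ∀ p q, 0 ≤ z p q) (hρ : 0 < ρ) (hρ1 : ρ ≤ 1)
    (hZ : SolvesEquation z Z ρ)
    (hz0 : ∀ x ∈ Ioo 0 ρ, HasSum (fun p => z p 0 * uhatReal x ^ p) (Z0hatReal x)) {x : ℝ}
    (hx : x ∈ Ioo 0 ρ) : HasSum (fun p => z p 1 * uhatReal x ^ p) (Z1hatReal x) := by
  have hu := uhatReal_pos hx.1 (hx.2.le.trans hρ1)
  have hm : ρ / 2 ∈ Ioo 0 ρ := ⟨by linarith, by linarith⟩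
  have hcol := summable_row (z := fun q p => z p q) (uhatReal_pos hm.1 (hm.2.le.trans hρ1))
    (hasSum_swap (hZ x ⟨hx.1.le, hx.2⟩ (ρ / 2) ⟨hm.1.le, hm.2⟩).1).summable
  set c : ℕ → ℝ := fun q => ∑' p, z p q * uhatReal x ^ p with hc
  have hc0 : c 0 = Z0hatReal x := (hz0 x hx).tsum_eq
  have hslope := tendsto_slope_powerSeries (c := c) (φ := uhatReal) (G := fun y => Z x y)
    (fun q => tsum_nonneg fun p => mul_nonneg (hz p q) (pow_nonneg hu.le p)) hρ
    tendsto_uhatReal_nhdsGT_zero (fun y hy => uhatReal_pos hy.1 (hy.2.le.trans hρ1))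
    (fun y hy => hasSum_rows (z := fun q p => z p q)
      (hasSum_swap (hZ x ⟨hx.1.le, hx.2⟩ y ⟨hy.1.le, hy.2⟩).1) fun q => (hcol q).hasSum)
  have hv := tendsto_uhatReal_nhdsGT_zero
  have hA := tendsto_Z0hatReal_nhdsGT_zero
  have hB : Tendsto Z1hatReal (𝓝[>] 0) (𝓝 (Z1hatReal 0)) :=
    (analyticAt_Z1hatReal zero_le_one).continuousAt.tendsto.mono_left nhdsWithin_le_nhds
  have hZlim : Tendsto (fun y => Z x y) (𝓝[>] 0) (𝓝 (Z0hatReal x)) := by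
    have h := (hslope.mul hv).const_add (c 0)
    rw [mul_zero, add_zero, hc0] at h
    refine h.congr' ?_
    filter_upwards [Ioo_mem_nhdsGT hρ] with y hy
    have hvy := (uhatReal_pos hy.1 (hy.2.le.trans hρ1)).ne'
    field_simp
    ring
  have hl := hslope.const_mul (uhatReal x ^ 2)
  have hr : Tendsto (fun y =>
      (nuc * uhatReal x - (nuc ^ 2 - 1) * tc * (Z0hatReal x + uhatReal x * Z1hatReal y))
        * (Z x y - Z0hatReal y)
      - (nuc ^ 2 - 1) * uhatReal x * (uhatReal x ^ 2 - tc * Z0hatReal x * Z1hatReal y)) (𝓝[>] 0)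
      (𝓝 ((nuc * uhatReal x - (nuc ^ 2 - 1) * tc * (Z0hatReal x + uhatReal x * Z1hatReal 0))
        * (Z0hatReal x - 1)
      - (nuc ^ 2 - 1) * uhatReal x * (uhatReal x ^ 2 - tc * Z0hatReal x * Z1hatReal 0))) :=
    (((((hB.const_mul _).const_add _).const_mul _).const_sub _).mul (hZlim.sub hA)).sub
      (((hB.const_mul _).const_sub _).const_mul _)
  have heq := tendsto_nhds_unique (hl.congr' (by
    filter_upwards [Ioo_mem_nhdsGT hρ] with y hy
    have hvy := (uhatReal_pos hy.1 (hy.2.le.trans hρ1)).ne'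
    have h2 := (hZ x ⟨hx.1.le, hx.2⟩ y ⟨hy.1.le, hy.2⟩).2
    rw [hc0]
    field_simp
    linear_combination -h2)) hr
  rw [uhatReal_sq_mul_Z1hatReal (hx.2.le.trans hρ1)] at heq
  have hc1 : c 1 = Z1hatReal x := mul_left_cancel₀ (pow_pos hu 2).ne' heq
  rw [← hc1]
  exact (hcol 1).hasSum

end Coefficients

theorem hasSum_of_eq {f g : ℕ → ℝ} {a b : ℝ} (h : HasSum f a) (hfg : ∀ k, g k = f k)
    (hab : b = a) : HasSum g b := by
  rw [hab]
  exact h.congr_fun hfg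

/-- Values at `uc` of a series parametrized by `Z0hat`, after removing its constant term. -/
theorem hasSum_shift_uc_of_Z0hatReal {a : ℕ → ℝ} (ha : ∀ p, 0 ≤ a p) (ha0 : a 0 = 1) {ρ : ℝ}
    (hρ : 0 < ρ) (hsum : ∀ x ∈ Ioo 0 ρ, HasSum (fun p => a p * uhatReal x ^ p) (Z0hatReal x)) :
    HasSum (fun k => uc ^ k * a (k + 1)) ((3 * Real.sqrt 7 - 4) / (10 * uc)) ∧
    HasSum (fun k : ℕ => k * (uc ^ k * a (k + 1))) (11 / (20 * uc)) := by
  have hu := uc_pos.ne'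
  have h := hasSum_of_parametrization ha hρ uhatReal_zero analyticAt_uhatReal
    strictMonoOn_uhatReal (fun x hx => (deriv_uhatReal_pos hx.2).ne')
    (fun x _ => analyticAt_Z0hatReal x) hsum
  have h1 := hasSum_endpoint ha uhatReal_zero strictMonoOn_uhatReal
    continuous_uhatReal.continuousAt (analyticAt_Z0hatReal 1).continuousAt h
  have h2 := hasSum_deriv_endpoint ha uhatReal_zero strictMonoOn_uhatReal
    continuous_uhatReal.continuousAt (analyticAt_Z0hatReal 1).continuousAt
    tendsto_slope_Z0hatReal h
  rw [uhatReal_one] at h1 h2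
  replace h1 := ((hasSum_nat_add_iff' 1).2 h1).div_const uc
  replace h2 := (hasSum_nat_add_iff' 1).2 h2
  have h3 : HasSum (fun k => uc ^ k * a (k + 1)) ((3 * Real.sqrt 7 - 4) / (10 * uc)) := by
    refine hasSum_of_eq h1 (fun k => ?_) ?_
    · rw [pow_succ]
      field_simp
    · simp only [Finset.range_one, Finset.sum_singleton, ha0, Z0hatReal_one]
      field_simp
      ring
  refine ⟨h3, ?_⟩
  refine hasSum_of_eq (h2.sub h3) (fun k => ?_) ?_
  · simp only [Nat.add_sub_cancel, Nat.cast_add, Nat.cast_one]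
    ring
  · simp only [Finset.range_one, Finset.sum_singleton, Nat.cast_zero, zero_mul, mul_zero, sub_zero]
    field_simp
    ring

/-- Values at `uc` of a series parametrized by `Z1hat`. -/
theorem hasSum_uc_of_Z1hatReal {a : ℕ → ℝ} (ha : ∀ p, 0 ≤ a p) {ρ : ℝ}
    (hρ : 0 < ρ) (hsum : ∀ x ∈ Ioo 0 ρ, HasSum (fun p => a p * uhatReal x ^ p) (Z1hatReal x)) :
    HasSum (fun k => uc ^ k * a k) (3 * (Real.sqrt 7 - 2) / (10 * uc)) ∧
    HasSum (fun k : ℕ => k * (uc ^ k * a k)) (3 / (20 * uc)) := by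
  have hu := uc_pos.ne'
  have h := hasSum_of_parametrization ha hρ uhatReal_zero analyticAt_uhatReal
    strictMonoOn_uhatReal (fun x hx => (deriv_uhatReal_pos hx.2).ne')
    (fun x hx => analyticAt_Z1hatReal hx.2.le) hsum
  have h1 := hasSum_endpoint ha uhatReal_zero strictMonoOn_uhatReal
    continuous_uhatReal.continuousAt (analyticAt_Z1hatReal le_rfl).continuousAt h
  have h2 := hasSum_deriv_endpoint ha uhatReal_zero strictMonoOn_uhatReal
    continuous_uhatReal.continuousAt (analyticAt_Z1hatReal le_rfl).continuousAt
    tendsto_slope_Z1hatReal h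
  rw [uhatReal_one] at h1 h2
  constructor
  · rw [← Z1hatReal_one]
    simpa only [mul_comm] using h1
  · refine hasSum_of_eq (h2.mul_left uc) (fun k => ?_) ?_
    · rcases k with _ | k
      · simp
      · simp only [Nat.add_sub_cancel, pow_succ]
        ring
    · field_simp

/-- `w` is a probability mass function on `ℤ²` with finite first absolute
moments, and both marginal means equal `1/(4√7)`; in particular the mean of the sum of the
coordinates is `1/(2√7)`. -/
theorem statement10
    (ρ : ℝ) (hρ : 0 < ρ)
    (z : ℕ → ℕ → ℝ) (hz_nonneg : ∀ p q, 0 ≤ z p q)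
    -- `z p 0` are the Taylor coefficients of `Z₀ = Ẑ₀ ∘ û⁻¹` at `0`
    (hz0 : ∀ H : ℂ, ‖H‖ < ρ →
      HasSum (fun p : ℕ => (z p 0 : ℂ) * uhat H ^ p) (Z0hat H))
    -- `z p q` are the Taylor coefficients at `(0,0)` of the solution `Z(u,v)` of the
    -- algebraic equation, expressed through the parametrization `u = û(H)`, `v = û(K)`
    (hZ : ∀ H K : ℂ, ‖H‖ < ρ → ‖K‖ < ρ → ∃ ZHK : ℂ,
      HasSum (fun pq : ℕ × ℕ => (z pq.1 pq.2 : ℂ) * uhat H ^ pq.1 * uhat K ^ pq.2) ZHK ∧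
      ((nuc : ℂ) * uhat K * uhat H - uhat H ^ 2
          - ((nuc : ℂ) ^ 2 - 1) * (tc : ℂ) * uhat K * (Z0hat H + uhat H * Z1hat K))
          * (ZHK - Z0hat K)
        = uhat H ^ 2 * (Z0hat K - Z0hat H)
          + ((nuc : ℂ) ^ 2 - 1) * uhat H * uhat K * (uhat H ^ 2 - (tc : ℂ) * Z0hat H * Z1hat K))
    -- the step distribution `w` on `ℤ²`: masses of the peeling events under `ℙ_∞`
    -- (masses assigned to coinciding points add up)
    (w : ℤ × ℤ → ℝ)
    (hw : ∀ v : ℤ × ℤ, w v =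
      (if v = (2, -1) then tc / uc else 0)
      + (if v = (0, 1) then nuc * tc / uc else 0)
      + (∑' k : ℕ, if v = (1, -(k : ℤ) - 1) then tc * uc ^ k * z 1 k else 0)
      + (∑' k : ℕ, if v = (0, -(k : ℤ)) then nuc * tc * uc ^ k * z 0 (k + 1) else 0)
      + (∑' k : ℕ, if v = (1 - (k : ℤ), -1) then tc * uc ^ k * z (k + 1) 0 else 0)
      + (∑' k : ℕ, if v = (-(k : ℤ), 0) then nuc * tc * uc ^ k * z k 1 else 0))
    :
    (∀ v : ℤ × ℤ, 0 ≤ w v) ∧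
    HasSum w 1 ∧
    Summable (fun v : ℤ × ℤ => |(v.1 : ℝ)| * w v) ∧
    Summable (fun v : ℤ × ℤ => |(v.2 : ℝ)| * w v) ∧
    (∑' v : ℤ × ℤ, (v.1 : ℝ) * w v) = 1 / (4 * Real.sqrt 7) ∧
    (∑' v : ℤ × ℤ, (v.2 : ℝ) * w v) = 1 / (4 * Real.sqrt 7) ∧
    (∑' v : ℤ × ℤ, ((v.1 : ℝ) + (v.2 : ℝ)) * w v) = 1 / (2 * Real.sqrt 7) := by
  set r := min ρ 1 with hr
  have hr0 : 0 < r := lt_min hρ one_pos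
  have hr1 : r ≤ 1 := min_le_right _ _
  have hnorm (x : ℝ) (hx : x ∈ Ico 0 r) : ‖(x : ℂ)‖ < ρ := by
    rw [Complex.norm_real, Real.norm_of_nonneg hx.1]
    exact hx.2.trans_le (min_le_left _ _)
  have hz0R : ∀ x ∈ Ico 0 r, HasSum (fun p => z p 0 * uhatReal x ^ p) (Z0hatReal x) := by
    intro x hx
    have h := hz0 x (hnorm x hx)
    rw [uhat_ofReal, Z0hat_ofReal] at h
    exact Complex.hasSum_ofReal.1 (by exact_mod_cast h)
  have hz00 : z 0 0 = 1 := by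
    have h1 := hz0R 0 ⟨le_rfl, hr0⟩
    rw [uhatReal_zero, Z0hatReal_zero] at h1
    have h2 := hasSum_single (f := fun p => z p 0 * (0 : ℝ) ^ p) 0 fun p hp => by simp [hp]
    simpa using h2.unique h1
  have hE : SolvesEquation z
      (fun x y => ∑' pq : ℕ × ℕ, z pq.1 pq.2 * uhatReal x ^ pq.1 * uhatReal y ^ pq.2) r := by
    intro x hx y hy
    obtain ⟨S, hS, heq⟩ := hZ x y (hnorm x hx) (hnorm y hy)
    simp only [uhat_ofReal, Z0hat_ofReal, Z1hat_ofReal] at hS heq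
    have hsum : Summable
        fun pq : ℕ × ℕ => z pq.1 pq.2 * uhatReal x ^ pq.1 * uhatReal y ^ pq.2 :=
      Complex.summable_ofReal.1 (by exact_mod_cast hS.summable)
    have hSeq := hS.unique
      ((Complex.hasSum_ofReal.2 hsum.hasSum).congr_fun fun pq => by push_cast; rfl)
    refine ⟨hsum.hasSum, ?_⟩
    rw [hSeq] at heq
    exact_mod_cast heq
  have hz0R' : ∀ x ∈ Ioo 0 r, HasSum (fun p => z p 0 * uhatReal x ^ p) (Z0hatReal x) :=
    fun x hx => hz0R x ⟨hx.1.le, hx.2⟩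
  obtain ⟨a1, a2⟩ := hasSum_shift_uc_of_Z0hatReal (fun p => hz_nonneg p 0) hz00 hr0 hz0R'
  obtain ⟨b1, b2⟩ := hasSum_shift_uc_of_Z0hatReal (fun q => hz_nonneg 0 q) hz00 hr0
    fun y hy => hasSum_coeff_zero_left hr0 hr1 hE hy
  obtain ⟨c1, c2⟩ := hasSum_uc_of_Z1hatReal (fun q => hz_nonneg 1 q) hr0
    fun y hy => hasSum_coeff_one_left hz_nonneg hr0 hr1 hE hy
  obtain ⟨d1, d2⟩ := hasSum_uc_of_Z1hatReal (fun p => hz_nonneg p 1) hr0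
    fun x hx => hasSum_coeff_one_right hz_nonneg hr0 hr1 hE hz0R' hx
  have hs := sqrt_seven_pos
  have hs2 := sqrt_seven_sq
  have ht := tc_pos
  have hu := uc_pos
  have hnu : 0 < nuc := by unfold nuc; positivity
  have hw0 : ∀ v, 0 ≤ w v := by
    intro v
    have nonneg_ite (P : Prop) [Decidable P] {b : ℝ} (hb : 0 ≤ b) : 0 ≤ if P then b else 0 := by
      split_ifs <;> simp [hb]
    rw [hw]
    refine add_nonneg (add_nonneg (add_nonneg (add_nonneg (add_nonneg ?_ ?_) ?_) ?_) ?_) ?_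
    · exact nonneg_ite _ (by positivity)
    · exact nonneg_ite _ (by positivity)
    all_goals
      refine tsum_nonneg fun k => nonneg_ite _ (mul_nonneg (by positivity) (hz_nonneg _ _))
  have total (ψ : ℤ × ℤ → ℝ) {B₁ B₂ B₃ B₄ : ℝ}
      (h1 : HasSum (fun k : ℕ => ψ (1, -(k : ℤ) - 1) * (tc * uc ^ k * z 1 k)) B₁)
      (h2 : HasSum (fun k : ℕ => ψ (0, -(k : ℤ)) * (nuc * tc * uc ^ k * z 0 (k + 1))) B₂)
      (h3 : HasSum (fun k : ℕ => ψ (1 - (k : ℤ), -1) * (tc * uc ^ k * z (k + 1) 0)) B₃)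
      (h4 : HasSum (fun k : ℕ => ψ (-(k : ℤ), 0) * (nuc * tc * uc ^ k * z k 1)) B₄) :
      HasSum (fun v => ψ v * w v)
        (ψ (2, -1) * (tc / uc) + ψ (0, 1) * (nuc * tc / uc) + B₁ + B₂ + B₃ + B₄) := by
    have := (((((hasSum_mul_pointMass (2, -1) (tc / uc) ψ).add
      (hasSum_mul_pointMass (0, 1) (nuc * tc / uc) ψ)).add
      (hasSum_mul_pointMasses (fun i j h => by simpa using h) h1)).add
      (hasSum_mul_pointMasses (fun i j h => by simpa using h) h2)).add
      (hasSum_mul_pointMasses (fun i j h => by simpa using h) h3)).add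
      (hasSum_mul_pointMasses (fun i j h => by simpa using h) h4)
    refine this.congr_fun fun v => ?_
    rw [hw]
    ring
  have htu : tc = 5 * uc / (6 * (7 + Real.sqrt 7)) := by
    rw [uc]
    field_simp
  have hone : HasSum w 1 := by
    have h := total (fun _ => 1)
      (hasSum_of_eq (c1.mul_left tc) (fun k => by ring) rfl)
      (hasSum_of_eq (b1.mul_left (nuc * tc)) (fun k => by ring) rfl)
      (hasSum_of_eq (a1.mul_left tc) (fun k => by ring) rfl)
      (hasSum_of_eq (d1.mul_left (nuc * tc)) (fun k => by ring) rfl)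
    simp only [one_mul] at h
    convert h using 1
    rw [htu, nuc]
    field_simp
    linear_combination (-60 : ℝ) * hs2
  have hx : HasSum (fun v : ℤ × ℤ => (v.1 : ℝ) * w v) (1 / (4 * Real.sqrt 7)) := by
    have h := total (fun v => (v.1 : ℝ))
      (hasSum_of_eq (c1.mul_left tc) (fun k => by push_cast; ring) rfl)
      (hasSum_of_eq hasSum_zero (fun k => by push_cast; ring) rfl)
      (hasSum_of_eq ((a1.sub a2).mul_left tc) (fun k => by push_cast; ring) rfl)
      (hasSum_of_eq (d2.mul_left (-(nuc * tc))) (fun k => by push_cast; ring) rfl)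
    convert h using 1
    push_cast
    rw [htu, nuc]
    field_simp
    linear_combination (-1200 : ℝ) * hs2
  have hy : HasSum (fun v : ℤ × ℤ => (v.2 : ℝ) * w v) (1 / (4 * Real.sqrt 7)) := by
    have h := total (fun v => (v.2 : ℝ))
      (hasSum_of_eq ((c2.add c1).mul_left (-tc)) (fun k => by push_cast; ring) rfl)
      (hasSum_of_eq (b2.mul_left (-(nuc * tc))) (fun k => by push_cast; ring) rfl)
      (hasSum_of_eq (a1.mul_left (-tc)) (fun k => by push_cast; ring) rfl)
      (hasSum_of_eq hasSum_zero (fun k => by push_cast; ring) rfl)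
    convert h using 1
    push_cast
    rw [htu, nuc]
    field_simp
    linear_combination (-1200 : ℝ) * hs2
  have habs {ψ : ℤ × ℤ → ℝ} (h : Summable fun v => ψ v * w v) : Summable fun v => |ψ v| * w v :=
    h.abs.congr fun v => by rw [abs_mul, abs_of_nonneg (hw0 v)]
  refine ⟨hw0, hone, habs hx.summable, habs hy.summable, hx.tsum_eq, hy.tsum_eq, ?_⟩
  have hxy := hx.add hy
  simp only [← add_mul] at hxy
  rw [hxy.tsum_eq]
  field_simp
  norm_num
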